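/- For all real n ≥ 0 one has q_{n,1} = n + 2/3 − (2/3)·H_{n+1}, where q_{n,1} = (n+1)·E[V_n], i.e. the first normalized moment of the volume of the random convex chain; moreover q_{1,k} = 2/(k+2) for all k ≥ 0. -/

import Mathlib

open MeasureTheory

noncomputable section

/-- The triangle with vertices (0,0), (1,0), (0,1). -/
def T : Set (ℝ × ℝ) := convexHull ℝ {(0, 0), (1, 0), (0, 1)}

/-- The uniform distribution on `T`: twice Lebesgue measure restricted to `T`. -/
def μT : Measure (ℝ × ℝ) := (2 : ENNReal) • (volume.restrict T)

/-- Joint law of `n` independent uniform points in `T`. -/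
def P (n : ℕ) : Measure (Fin n → ℝ × ℝ) := Measure.pi fun _ => μT

/-- The random convex chain: convex hull of the points together with `(1,0)` and `(0,1)`. -/
def Tchain (n : ℕ) (ω : Fin n → ℝ × ℝ) : Set (ℝ × ℝ) :=
  convexHull ℝ (Set.range ω ∪ {(1, 0), (0, 1)})

/-- Normalized area `V_n = 2 vol(T_n)`. -/
def V (n : ℕ) (ω : Fin n → ℝ × ℝ) : ℝ := 2 * (volume (Tchain n ω)).toReal

/-- Number of vertices of `T_n` other than the two corners. -/
def N (n : ℕ) (ω : Fin n → ℝ × ℝ) : ℕ :=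
  (Set.extremePoints ℝ (Tchain n ω)).ncard - 2

/-- Normalized moments `q_{n,k} = C(n+k,k) E[V_n^k]`. -/
def q (n k : ℕ) : ℝ := ((n + k).choose k : ℝ) * ∫ ω, (V n ω) ^ k ∂ P n

/-- Probability generating function of `N_n`. -/
def G (n : ℕ) (t : ℝ) : ℝ := ∫ ω, t ^ (N n ω) ∂ P n

/-- Harmonic number. -/
def H (j : ℕ) : ℝ := ∑ i ∈ Finset.range j, 1 / ((i : ℝ) + 1)

/-- Generalized harmonic number of order 2. -/
def H2 (j : ℕ) : ℝ := ∑ i ∈ Finset.range j, 1 / ((i : ℝ) + 1) ^ 2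

/-- `c(k,ℓ)`: elementary symmetric polynomial `e_k` of `2/(j(j+1))`, `j = 1,…,ℓ`. -/
def c (k l : ℕ) : ℝ :=
  ∑ S ∈ (Finset.Icc 1 l).powersetCard k, ∏ j ∈ S, 2 / ((j : ℝ) * ((j : ℝ) + 1))



lemma T_eq : T = {z : ℝ × ℝ | 0 ≤ z.1 ∧ 0 ≤ z.2 ∧ z.1 + z.2 ≤ 1} := by
  apply Set.Subset.antisymm
  · apply convexHull_min
    · intro z hz
      simp only [Set.mem_insert_iff, Set.mem_singleton_iff] at hz
      rcases hz with rfl | rfl | rfl <;> norm_num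
    · intro x hx y hy a b ha hb hab
      obtain ⟨h1, h2, h3⟩ := hx
      obtain ⟨h4, h5, h6⟩ := hy
      refine ⟨?_, ?_, ?_⟩ <;>
        simp only [Prod.fst_add, Prod.smul_fst, Prod.snd_add, Prod.smul_snd, smul_eq_mul]
      · positivity
      · positivity
      · nlinarith
  · rintro ⟨x, y⟩ ⟨h1, h2, h3⟩
    simp only at h1 h2 h3
    have e : ((x, y) : ℝ × ℝ) = (1 - x - y) • ((0, 0) : ℝ × ℝ) + x • ((1, 0) : ℝ × ℝ)
        + y • ((0, 1) : ℝ × ℝ) := by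
      ext <;> simp
    rw [e]
    have hc : Convex ℝ T := convex_convexHull ℝ _
    have := hc.sum_mem (t := Finset.univ) (w := ![1 - x - y, x, y])
      (z := ![((0, 0) : ℝ × ℝ), (1, 0), (0, 1)]) ?_ ?_ ?_
    · simpa [Fin.sum_univ_three] using this
    · intro i _
      fin_cases i <;> simp <;> linarith
    · simp [Fin.sum_univ_three]; ring
    · intro i _
      apply subset_convexHull
      fin_cases i <;> simp

/-- open triangle -/
def To : Set (ℝ × ℝ) := {z : ℝ × ℝ | 0 < z.1 ∧ 0 < z.2 ∧ z.1 + z.2 < 1}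

lemma To_subset : To ⊆ T := by
  rw [T_eq]
  rintro z ⟨h1, h2, h3⟩
  exact ⟨h1.le, h2.le, h3.le⟩

lemma meas_T : MeasurableSet T := by
  rw [T_eq]
  measurability

lemma meas_To : MeasurableSet To := by
  unfold To
  measurability

lemma lint_line (c m : ℝ) (hm : 0 < m) (hc : 0 < c) :
    ∫⁻ x in Set.Ioi (0 : ℝ), ENNReal.ofReal (c - m * x) = ENNReal.ofReal (c ^ 2 / (2 * m)) := by
  have h1 : ∫⁻ x in Set.Ioi (0 : ℝ), ENNReal.ofReal (c - m * x)
      = ∫⁻ x in Set.Ioc (0 : ℝ) (c / m), ENNReal.ofReal (c - m * x) := by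
    rw [← lintegral_indicator measurableSet_Ioi, ← lintegral_indicator measurableSet_Ioc]
    congr 1
    ext x
    simp only [Set.indicator, Set.mem_Ioi, Set.mem_Ioc]
    by_cases h : 0 < x
    · by_cases h' : x ≤ c / m
      · simp [h, h']
      · simp only [h, h', if_true, and_false, if_false]
        apply ENNReal.ofReal_of_nonpos
        push Not at h'
        rw [div_lt_iff₀ hm] at h'
        linarith
    · simp [h]
  rw [h1, ← ofReal_integral_eq_lintegral_ofReal]
  · congr 1
    rw [← intervalIntegral.integral_of_le (by positivity)]
    rw [intervalIntegral.integral_sub (by simp) (by apply Continuous.intervalIntegrable; fun_prop),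
      intervalIntegral.integral_const_mul]
    simp
    field_simp
    ring
  · apply IntegrableOn.integrable
    exact (Continuous.integrableOn_Icc (by fun_prop)).mono_set Set.Ioc_subset_Icc_self
  · filter_upwards [ae_restrict_mem measurableSet_Ioc] with x hx
    have := hx.2
    rw [le_div_iff₀ hm] at this
    simp only [Pi.zero_apply]
    linarith

lemma vol_le (c m : ℝ) (hm : 0 < m) (hc : 0 < c) :
    volume {z : ℝ × ℝ | 0 ≤ z.1 ∧ 0 ≤ z.2 ∧ z.2 + m * z.1 ≤ c} ≤ ENNReal.ofReal (c ^ 2 / (2 * m)) := by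
  rw [← lint_line c m hm hc, Measure.volume_eq_prod, Measure.prod_apply]
  · rw [← setLIntegral_congr (Ioi_ae_eq_Ici (μ := volume) (a := (0:ℝ))).symm,
      ← lintegral_indicator measurableSet_Ici]
    apply lintegral_mono
    intro x
    simp only [Set.indicator, Set.mem_Ici]
    split_ifs with h
    · calc _ ≤ volume (Set.Icc 0 (c - m * x)) := by
            apply measure_mono
            rintro y ⟨h1, h2, h3⟩
            simp only at h1 h2 h3
            exact ⟨h2, by linarith⟩
        _ = _ := by simp
    · have : (Prod.mk x ⁻¹' {z : ℝ × ℝ | 0 ≤ z.1 ∧ 0 ≤ z.2 ∧ z.2 + m * z.1 ≤ c}) = ∅ := by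
        ext y
        simp [h]
      rw [this]; simp
  · measurability

lemma le_vol (c m : ℝ) (hm : 0 < m) (hc : 0 < c) :
    ENNReal.ofReal (c ^ 2 / (2 * m)) ≤ volume {z : ℝ × ℝ | 0 < z.1 ∧ 0 < z.2 ∧ z.2 + m * z.1 < c} := by
  rw [← lint_line c m hm hc, Measure.volume_eq_prod, Measure.prod_apply]
  · rw [← lintegral_indicator measurableSet_Ioi]
    apply lintegral_mono
    intro x
    simp only [Set.indicator, Set.mem_Ioi]
    split_ifs with h
    · calc _ = volume (Set.Ioo 0 (c - m * x)) := by simp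
        _ ≤ _ := by
            apply measure_mono
            rintro y ⟨h1, h2⟩
            exact ⟨h, h1, by simp only; linarith⟩
    · simp
  · measurability

lemma vol_To : volume To = ENNReal.ofReal (1 / 2) ∧ volume T = ENNReal.ofReal (1 / 2) := by
  have h1 : ENNReal.ofReal (1 / 2) ≤ volume To := by
    have := le_vol 1 1 one_pos one_pos
    norm_num at this ⊢
    refine this.trans (measure_mono ?_)
    rintro z ⟨h1, h2, h3⟩
    exact ⟨h1, h2, by linarith⟩
  have h2 : volume T ≤ ENNReal.ofReal (1 / 2) := by
    have := vol_le 1 1 one_pos one_pos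
    norm_num at this ⊢
    refine le_trans (measure_mono ?_) this
    rw [T_eq]
    rintro z ⟨h1, h2, h3⟩
    exact ⟨h1, h2, by linarith⟩
  have h3 := measure_mono (μ := (volume : Measure (ℝ × ℝ))) To_subset
  exact ⟨le_antisymm (h3.trans h2) h1, le_antisymm h2 (h1.trans h3)⟩

lemma muT_eq : μT = (2 : ENNReal) • (volume.restrict To) := by
  unfold μT
  congr 1
  apply Measure.restrict_congr_set
  symm
  apply ae_eq_of_subset_of_measure_ge To_subset
  · rw [vol_To.1, vol_To.2]
  · exact meas_To.nullMeasurableSet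
  · rw [vol_To.2]; simp

lemma two_half (r : ℝ) : (2 : ENNReal) * ENNReal.ofReal r = ENNReal.ofReal (2 * r) := by
  rw [ENNReal.ofReal_mul (by norm_num)]; simp

instance : IsProbabilityMeasure μT := by
  constructor
  simp only [μT, Measure.smul_apply, Measure.restrict_apply MeasurableSet.univ, Set.univ_inter,
    vol_To.2, smul_eq_mul, two_half]
  norm_num

instance (n : ℕ) : IsProbabilityMeasure (P n) := by
  unfold P; infer_instance

lemma ae_To : ∀ᵐ p ∂μT, p ∈ To := by
  rw [muT_eq]
  exact Measure.ae_smul_measure (ae_restrict_mem meas_To) _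

lemma meas_above (c m : ℝ) : MeasurableSet {z : ℝ × ℝ | z.2 + m * z.1 ≤ c} ∧
    MeasurableSet {z : ℝ × ℝ | z.2 + m * z.1 < c} :=
  ⟨(isClosed_le (by fun_prop) (by fun_prop)).measurableSet,
    (isOpen_lt (by fun_prop) (by fun_prop)).measurableSet⟩

lemma muT_below (c m : ℝ) (hc : 0 < c) (hc1 : c ≤ 1) (hcm : c ≤ m) :
    μT {z : ℝ × ℝ | z.2 + m * z.1 ≤ c} = ENNReal.ofReal (c ^ 2 / m) ∧
    μT {z : ℝ × ℝ | z.2 + m * z.1 < c} = ENNReal.ofReal (c ^ 2 / m) := by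
  have hm : 0 < m := hc.trans_le hcm
  have e : ENNReal.ofReal (c ^ 2 / m) = 2 * ENNReal.ofReal (c ^ 2 / (2 * m)) := by
    rw [two_half]; congr 1; field_simp
  have h1 : μT {z : ℝ × ℝ | z.2 + m * z.1 ≤ c} ≤ ENNReal.ofReal (c ^ 2 / m) := by
    rw [e]
    simp only [μT, Measure.smul_apply, Measure.restrict_apply (meas_above c m).1, smul_eq_mul]
    gcongr
    refine le_trans (measure_mono ?_) (vol_le c m hm hc)
    rw [T_eq]
    rintro z ⟨h1, h2, h3, h4⟩
    exact ⟨h2, h3, h1⟩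
  have h2 : ENNReal.ofReal (c ^ 2 / m) ≤ μT {z : ℝ × ℝ | z.2 + m * z.1 < c} := by
    rw [e]
    simp only [μT, Measure.smul_apply, Measure.restrict_apply (meas_above c m).2, smul_eq_mul]
    gcongr
    refine le_trans (le_vol c m hm hc) (measure_mono ?_)
    rw [T_eq]
    rintro z ⟨h1, h2, h3⟩
    refine ⟨h3, h1.le, h2.le, ?_⟩
    by_contra hh
    push Not at hh
    rcases le_or_gt 1 m with h | h
    · nlinarith
    · nlinarith [mul_pos (sub_pos.2 h) h2]
  have h3 : μT {z : ℝ × ℝ | z.2 + m * z.1 < c} ≤ μT {z : ℝ × ℝ | z.2 + m * z.1 ≤ c} := by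
    apply measure_mono
    intro z hz
    have h : z.2 + m * z.1 < c := hz
    exact h.le
  exact ⟨le_antisymm h1 (h2.trans h3), le_antisymm (h3.trans h1) h2⟩

lemma muT_above (c m : ℝ) (hc : 0 < c) (hc1 : c ≤ 1) (hcm : c ≤ m) :
    μT {z : ℝ × ℝ | c ≤ z.2 + m * z.1} = ENNReal.ofReal (1 - c ^ 2 / m) ∧
    μT {z : ℝ × ℝ | c < z.2 + m * z.1} = ENNReal.ofReal (1 - c ^ 2 / m) := by
  have hm : 0 < m := hc.trans_le hcm
  have e1 : {z : ℝ × ℝ | c ≤ z.2 + m * z.1} = {z : ℝ × ℝ | z.2 + m * z.1 < c}ᶜ := by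
    ext z; simp
  have e2 : {z : ℝ × ℝ | c < z.2 + m * z.1} = {z : ℝ × ℝ | z.2 + m * z.1 ≤ c}ᶜ := by
    ext z; simp
  rw [e1, e2, prob_compl_eq_one_sub (meas_above c m).1, prob_compl_eq_one_sub (meas_above c m).2,
    (muT_below c m hc hc1 hcm).1, (muT_below c m hc hc1 hcm).2, ENNReal.ofReal_sub _ (by positivity)]
  simp


/-- orientation determinant of `X - p` and `z - p` -/
def Dt (p X z : ℝ × ℝ) : ℝ := (X.1 - p.1) * (z.2 - p.2) - (X.2 - p.2) * (z.1 - p.1)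

lemma Dt_anti (p X z : ℝ × ℝ) : Dt p z X = - Dt p X z := by
  unfold Dt; ring

lemma mem_of_Dt {C : Set (ℝ × ℝ)} (hC : Convex ℝ C) (h1 : ((1, 0) : ℝ × ℝ) ∈ C)
    (h2 : ((0, 1) : ℝ × ℝ) ∈ C) {p X Z : ℝ × ℝ} (hp : p ∈ To) (hX : X ∈ C) (hZ : Z ∈ C)
    (hpX : p.1 < X.1) (hZp : Z.1 ≤ p.1) (hD : Dt p X Z ≤ 0) : p ∈ C := by
  obtain ⟨u, v⟩ := p
  obtain ⟨x, y⟩ := X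
  obtain ⟨a, b⟩ := Z
  obtain ⟨hu, hv, huv⟩ := hp
  simp only [Dt] at *
  have hxa : 0 < x - a := by linarith
  have htop : ((u, 1 - u) : ℝ × ℝ) ∈ C := by
    have := hC h1 h2 hu.le (by linarith : 0 ≤ 1 - u) (by ring)
    simpa using this
  obtain ⟨w, hw⟩ : ∃ w, w = ((u - a) * y + (x - u) * b) / (x - a) := ⟨_, rfl⟩
  have hw' : w * (x - a) = (u - a) * y + (x - u) * b := by rw [hw]; field_simp
  have hbot : ((u, w) : ℝ × ℝ) ∈ C := by
    have := hC hX hZ (div_nonneg (by linarith : 0 ≤ u - a) hxa.le)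
      (div_nonneg (by linarith : 0 ≤ x - u) hxa.le) (by field_simp; ring)
    convert this using 1
    ext
    · simp; field_simp; ring
    · simp [hw]; field_simp
  have hwv : w ≤ v := by
    by_contra hh
    push Not at hh
    nlinarith [mul_pos (sub_pos.2 hh) hxa]
  have hpos : 0 < 1 - u - w := by linarith
  have := hC hbot htop (div_nonneg (by linarith : 0 ≤ 1 - u - v) hpos.le)
      (div_nonneg (by linarith : 0 ≤ v - w) hpos.le) (by field_simp; ring)
  convert this using 1
  ext
  · simp; field_simp; ring
  · simp; field_simp; ring

lemma not_mem_of_Dt {S : Set (ℝ × ℝ)} {p X : ℝ × ℝ} (hpX : p.1 < X.1)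
    (h : ∀ z ∈ S, z = X ∨ 0 < Dt p X z) : p ∉ convexHull ℝ S := by
  intro hp
  have hsub : convexHull ℝ S ⊆ {z : ℝ × ℝ | 0 ≤ Dt p X z ∧ (Dt p X z = 0 → p.1 < z.1)} := by
    apply convexHull_min
    · intro z hz
      rcases h z hz with rfl | h'
      · refine ⟨by unfold Dt; apply le_of_eq; ring, fun _ => hpX⟩
      · exact ⟨h'.le, fun h0 => absurd h0 h'.ne'⟩
    · intro z hz w hw a b ha hb hab
      obtain ⟨z1, z2⟩ := hz
      obtain ⟨w1, w2⟩ := hw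
      have e : Dt p X (a • z + b • w) = a * Dt p X z + b * Dt p X w := by
        have hb' : b = 1 - a := by linarith
        subst hb'
        simp [Dt]; ring
      show 0 ≤ _ ∧ (_ → _)
      rw [e]
      refine ⟨by positivity, fun h0 => ?_⟩
      have k1 : a * Dt p X z = 0 := by nlinarith [mul_nonneg ha z1, mul_nonneg hb w1]
      have k2 : b * Dt p X w = 0 := by nlinarith [mul_nonneg ha z1, mul_nonneg hb w1]
      simp only [Prod.fst_add, Prod.smul_fst, smul_eq_mul]
      rcases mul_eq_zero.1 k1 with k | k
      · have : b = 1 := by linarith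
        subst this; subst k
        have := w2 (by simpa using k2)
        linarith
      · rcases mul_eq_zero.1 k2 with k' | k'
        · have : a = 1 := by linarith
          subst this; subst k'
          have := z2 k
          linarith
        · have k3 : z.1 ∈ Set.Ioi p.1 := z2 k
          have k4 : w.1 ∈ Set.Ioi p.1 := w2 k'
          exact (convex_Ioi p.1) k3 k4 ha hb hab
  have := (hsub hp).2 (by unfold Dt; ring)
  exact lt_irrefl _ this

/-- the region of admissible `X` for `p` -/
def Adm (p X : ℝ × ℝ) : Prop :=
  p ∈ To ∧ X ∈ To ∧ p.1 < X.1 ∧ 0 < Dt p X (1, 0) ∧ 0 < Dt p X (0, 1)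

lemma geom_up {n : ℕ} {ω : Fin n → ℝ × ℝ} (hω : ∀ i, ω i ∈ To) {p : ℝ × ℝ} (hp : p ∈ To)
    (h : p ∉ Tchain n ω) : (∀ j, 0 ≤ Dt p (1, 0) (ω j)) ∨
      ∃ i, Adm p (ω i) ∧ ∀ j, j ≠ i → 0 ≤ Dt p (ω i) (ω j) := by
  have hC : Convex ℝ (Tchain n ω) := convex_convexHull ℝ _
  have h1 : ((1, 0) : ℝ × ℝ) ∈ Tchain n ω := subset_convexHull ℝ _ (by simp)
  have h2 : ((0, 1) : ℝ × ℝ) ∈ Tchain n ω := subset_convexHull ℝ _ (by simp)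
  have hm : ∀ i, ω i ∈ Tchain n ω := fun i => subset_convexHull ℝ _ (by simp)
  have hp' := hp
  obtain ⟨hu, hv, huv⟩ := hp'
  have key : ∀ X Z, X ∈ Tchain n ω → Z ∈ Tchain n ω → p.1 < X.1 → Z.1 ≤ p.1 → 0 < Dt p X Z := by
    intro X Z hX hZ hpX hZp
    by_contra hh
    exact h (mem_of_Dt hC h1 h2 hp hX hZ hpX hZp (not_lt.1 hh))
  by_cases hb : ∀ j, 0 ≤ Dt p (1, 0) (ω j)
  · exact Or.inl hb
  right
  push Not at hb
  obtain ⟨j0, hj0⟩ := hb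
  have e1r : p.1 < ((1, 0) : ℝ × ℝ).1 := by simp only; linarith
  have hj0r : p.1 < (ω j0).1 := by
    by_contra hh
    exact absurd (key _ _ h1 (hm j0) e1r (not_lt.1 hh)) (not_lt.2 hj0.le)
  let t : ℝ × ℝ → ℝ := fun z => (p.2 - z.2) / (z.1 - p.1)
  have ht : ∀ X Z, p.1 < X.1 → p.1 < Z.1 →
      Dt p X Z = (X.1 - p.1) * (Z.1 - p.1) * (t X - t Z) := by
    intro X Z hX hZ
    have hX' : X.1 - p.1 ≠ 0 := by linarith
    have hZ' : Z.1 - p.1 ≠ 0 := by linarith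
    simp only [t, Dt]
    field_simp
    ring
  obtain ⟨i, hi, hmax⟩ := Finset.exists_max_image (Finset.univ.filter fun j => p.1 < (ω j).1)
    (fun j => t (ω j)) ⟨j0, by simp [hj0r]⟩
  simp only [Finset.mem_filter, Finset.mem_univ, true_and] at hi hmax
  refine ⟨i, ⟨hp, hω i, hi, ?_, ?_⟩, ?_⟩
  · have k1 := hmax j0 hj0r
    rw [ht _ _ e1r hj0r] at hj0
    rw [ht _ _ hi e1r]
    have k2 : t (1, 0) < t (ω j0) := by
      by_contra hh
      have := mul_nonneg (mul_nonneg (sub_nonneg.2 e1r.le) (sub_nonneg.2 hj0r.le))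
        (sub_nonneg.2 (not_lt.1 hh))
      linarith
    exact mul_pos (mul_pos (sub_pos.2 hi) (sub_pos.2 e1r)) (by linarith)
  · exact key _ _ (hm i) h2 hi hu.le
  · intro j _
    by_cases hj : p.1 < (ω j).1
    · rw [ht _ _ hi hj]
      exact mul_nonneg (mul_nonneg (sub_nonneg.2 hi.le) (sub_nonneg.2 hj.le))
        (sub_nonneg.2 (hmax j hj))
    · exact (key _ _ (hm i) (hm j) hi (not_lt.1 hj)).le

lemma geom_low0 {n : ℕ} {ω : Fin n → ℝ × ℝ} {p : ℝ × ℝ} (hp : p ∈ To)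
    (h : ∀ j, 0 < Dt p (1, 0) (ω j)) : p ∉ Tchain n ω := by
  obtain ⟨hu, hv, huv⟩ := hp
  apply not_mem_of_Dt (X := (1, 0))
  · simp only; linarith
  · rintro z (⟨j, rfl⟩ | hz)
    · exact Or.inr (h j)
    · simp only [Set.mem_insert_iff, Set.mem_singleton_iff] at hz
      rcases hz with rfl | rfl
      · exact Or.inl rfl
      · right; simp only [Dt]; linarith

lemma geom_lowi {n : ℕ} {ω : Fin n → ℝ × ℝ} {p : ℝ × ℝ} (i : Fin n)
    (h : Adm p (ω i)) (h' : ∀ j, j ≠ i → 0 < Dt p (ω i) (ω j)) : p ∉ Tchain n ω := by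
  obtain ⟨_, _, h1, h2, h3⟩ := h
  apply not_mem_of_Dt (X := ω i) h1
  rintro z (⟨j, rfl⟩ | hz)
  · by_cases hj : j = i
    · left; rw [hj]
    · exact Or.inr (h' j hj)
  · simp only [Set.mem_insert_iff, Set.mem_singleton_iff] at hz
    rcases hz with rfl | rfl
    · exact Or.inr h2
    · exact Or.inr h3


lemma lint_mul {f : ℝ → ENNReal} (hf : Measurable f) {k : ℝ} (hk : 0 < k) :
    ∫⁻ x, f x = ENNReal.ofReal k * ∫⁻ x, f (k * x) := by
  conv_lhs => rw [← Real.smul_map_volume_mul_left hk.ne']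
  rw [lintegral_smul_measure, lintegral_map hf (by fun_prop), abs_of_pos hk, smul_eq_mul]

lemma lint_pair {f : ℝ × ℝ → ENNReal} (hf : Measurable f) :
    ∫⁻ p, f p = ∫⁻ u, ∫⁻ v, f (u, v) := by
  rw [Measure.volume_eq_prod, lintegral_prod _ hf.aemeasurable]

lemma lint_swap {f : ℝ × ℝ → ENNReal} (hf : Measurable f) :
    ∫⁻ u, ∫⁻ v, f (u, v) = ∫⁻ v, ∫⁻ u, f (u, v) :=
  lintegral_lintegral_swap (f := fun u v => f (u, v)) hf.aemeasurable

/-- slope of the line through `p` and `X` (with a minus sign) -/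
def mm (p X : ℝ × ℝ) : ℝ := (p.2 - X.2) / (X.1 - p.1)

/-- intercept of the line through `p` and `X` -/
def cc (p X : ℝ × ℝ) : ℝ := p.2 + mm p X * p.1

lemma meas_Adm : MeasurableSet {q : (ℝ × ℝ) × (ℝ × ℝ) | Adm q.1 q.2} := by
  unfold Adm To Dt
  measurability

open Classical in
/-- integrand for pairs -/
def Fq (N : ℕ) (q : (ℝ × ℝ) × (ℝ × ℝ)) : ENNReal :=
  if Adm q.1 q.2 then ENNReal.ofReal (1 - cc q.1 q.2 ^ 2 / mm q.1 q.2) ^ N else 0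

lemma meas_Fq (N : ℕ) : Measurable (Fq N) := by
  unfold Fq
  refine Measurable.ite meas_Adm ?_ measurable_const
  unfold cc mm
  fun_prop

/-- transformed integrand -/
def Phi (N : ℕ) (q : (ℝ × ℝ) × (ℝ × ℝ)) : ENNReal :=
  {q : (ℝ × ℝ) × (ℝ × ℝ) | 0 < q.1.1 ∧ q.1.1 < q.1.2 ∧ 0 < q.2.1 ∧ q.2.2 < 1 ∧ q.2.2 < q.2.1 ∧
    q.2.1 * q.1.2 < q.2.2}.indicator (fun q => ENNReal.ofReal (q.1.2 - q.1.1) *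
      ENNReal.ofReal (1 - q.2.2 ^ 2 / q.2.1) ^ N) q

lemma meas_Phi (N : ℕ) : Measurable (Phi N) := by
  unfold Phi
  refine Measurable.indicator (by fun_prop) (by measurability)

lemma Fq_Phi (N : ℕ) (u x m c : ℝ) (h : u < x) :
    ENNReal.ofReal (x - u) * Fq N ((u, c - m * u), (x, c - m * x)) = Phi N ((u, x), (m, c)) := by
  have hxu : 0 < x - u := by linarith
  have e1 : mm (u, c - m * u) (x, c - m * x) = m := by
    simp only [mm]; field_simp; ring
  have e2 : cc (u, c - m * u) (x, c - m * x) = c := by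
    simp only [cc, e1]; ring
  have e3 : Dt (u, c - m * u) (x, c - m * x) (1, 0) = (x - u) * (m - c) := by
    simp only [Dt]; ring
  have e4 : Dt (u, c - m * u) (x, c - m * x) (0, 1) = (x - u) * (1 - c) := by
    simp only [Dt]; ring
  have iff : Adm (u, c - m * u) (x, c - m * x) ↔
      (0 < u ∧ u < x ∧ 0 < m ∧ c < 1 ∧ c < m ∧ m * x < c) := by
    unfold Adm
    rw [e3, e4, mul_pos_iff_of_pos_left hxu, mul_pos_iff_of_pos_left hxu]
    simp only [To, Set.mem_ofPred_eq]
    constructor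
    · rintro ⟨⟨h1, h2, h3⟩, ⟨h4, h5, h6⟩, h7, h8, h9⟩
      refine ⟨h1, h7, ?_, by linarith, by linarith, by linarith⟩
      by_contra hm
      push Not at hm
      have : 0 < 1 - x := by linarith
      nlinarith
    · rintro ⟨h1, h2, h3, h4, h5, h6⟩
      have k : ∀ s, 0 < s → s ≤ x → s + (c - m * s) < 1 := by
        intro s hs hsx
        have : m * s < c := by nlinarith
        by_contra hh
        push Not at hh
        rcases le_or_gt 1 m with h | h
        · nlinarith
        · have : s < 1 := by nlinarith
          nlinarith [mul_pos (sub_pos.2 h) (sub_pos.2 this)]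
      refine ⟨⟨h1, by nlinarith, k u h1 h2.le⟩, ⟨by linarith, by linarith, k x (by linarith) le_rfl⟩,
        h, by linarith, by linarith⟩
  unfold Fq Phi
  simp only [Set.indicator, Set.mem_ofPred_eq, iff, e1, e2]
  split_ifs <;> simp

lemma inner_sub (N : ℕ) (u x : ℝ) :
    ∫⁻ v, ∫⁻ y, Fq N ((u, v), (x, y)) = ∫⁻ q : ℝ × ℝ, Phi N ((u, x), q) := by
  have hF := meas_Fq N
  rw [lint_pair (f := fun q => Phi N ((u, x), q)) ((meas_Phi N).comp (by fun_prop))]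
  by_cases h : u < x
  · have hxu : 0 < x - u := by linarith
    have s1 : ∀ v, ∫⁻ y, Fq N ((u, v), (x, y))
        = ENNReal.ofReal (x - u) * ∫⁻ m, Fq N ((u, v), (x, v - (x - u) * m)) := by
      intro v
      rw [← lintegral_sub_left_eq_self (fun y => Fq N ((u, v), (x, y))) v]
      exact lint_mul (f := fun y => Fq N ((u, v), (x, v - y))) (hF.comp (by fun_prop)) hxu
    simp_rw [s1]
    have hG : Measurable fun z : ℝ × ℝ => Fq N ((u, z.1), (x, z.1 - (x - u) * z.2)) :=
      hF.comp (by fun_prop)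
    rw [lintegral_const_mul _ (Measurable.lintegral_prod_right' hG), lint_swap hG,
      ← lintegral_const_mul _ (Measurable.lintegral_prod_left' hG)]
    congr 1
    ext m
    have hG' : Measurable fun c : ℝ => Fq N ((u, c), (x, c - (x - u) * m)) := hF.comp (by fun_prop)
    have s3 : ENNReal.ofReal (x - u) * ∫⁻ c, Fq N ((u, c), (x, c - (x - u) * m))
        = ∫⁻ c, Phi N ((u, x), (m, c)) := by
      rw [← lintegral_const_mul _ hG', ← lintegral_sub_right_eq_self _ (m * u)]
      congr 1
      ext c
      rw [← Fq_Phi N u x m c h]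
      have e : c - m * u - (x - u) * m = c - m * x := by ring
      rw [e]
    exact s3
  · have z1 : ∀ v y, Fq N ((u, v), (x, y)) = 0 := by
      intro v y
      simp [Fq, Adm, h]
    have z2 : ∀ v y, Phi N ((u, x), (v, y)) = 0 := by
      intro v y
      simp [Phi, h]
    simp [z1, z2]

lemma J_step1 (N : ℕ) :
    ∫⁻ p : ℝ × ℝ, ∫⁻ X : ℝ × ℝ, Fq N (p, X) = ∫⁻ q : ℝ × ℝ, ∫⁻ r : ℝ × ℝ, Phi N (r, q) := by
  have hF := meas_Fq N
  have hP := meas_Phi N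
  rw [lint_pair (Measurable.lintegral_prod_right' hF)]
  have s1 : ∀ u v, ∫⁻ X : ℝ × ℝ, Fq N ((u, v), X) = ∫⁻ x, ∫⁻ y, Fq N ((u, v), (x, y)) := by
    intro u v
    exact lint_pair (f := fun X => Fq N ((u, v), X)) (hF.comp (by fun_prop))
  simp_rw [s1]
  have s2 : ∀ u, ∫⁻ v, ∫⁻ x, ∫⁻ y, Fq N ((u, v), (x, y))
      = ∫⁻ x, ∫⁻ v, ∫⁻ y, Fq N ((u, v), (x, y)) := by
    intro u
    refine lint_swap (f := fun z => ∫⁻ y, Fq N ((u, z.1), (z.2, y))) ?_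
    have : Measurable fun w : (ℝ × ℝ) × ℝ => Fq N ((u, w.1.1), (w.1.2, w.2)) :=
      hF.comp (by fun_prop)
    exact Measurable.lintegral_prod_right' this
  simp_rw [s2, inner_sub]
  rw [← lint_pair (f := fun r => ∫⁻ q : ℝ × ℝ, Phi N (r, q)) (Measurable.lintegral_prod_right' hP)]
  exact lintegral_lintegral_swap (f := fun r q => Phi N (r, q)) hP.aemeasurable

lemma tri_moment (s : ℝ) (hs : 0 < s) :
    ∫⁻ u, ∫⁻ x, {z : ℝ × ℝ | 0 < z.1 ∧ z.1 < z.2 ∧ z.2 < s}.indicator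
      (fun z => ENNReal.ofReal (z.2 - z.1)) (u, x) = ENNReal.ofReal (s ^ 3 / 6) := by
  have inner : ∀ u, ∫⁻ x, {z : ℝ × ℝ | 0 < z.1 ∧ z.1 < z.2 ∧ z.2 < s}.indicator
      (fun z => ENNReal.ofReal (z.2 - z.1)) (u, x)
      = (Set.Ioc 0 s).indicator (fun u => ENNReal.ofReal ((s - u) ^ 2 / 2)) u := by
    intro u
    by_cases hu : u ∈ Set.Ioc 0 s
    · rw [Set.indicator_of_mem hu]
      have : ∫⁻ x, {z : ℝ × ℝ | 0 < z.1 ∧ z.1 < z.2 ∧ z.2 < s}.indicator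
        (fun z => ENNReal.ofReal (z.2 - z.1)) (u, x) = ∫⁻ x in Set.Ioo u s, ENNReal.ofReal (x - u) := by
        rw [← lintegral_indicator measurableSet_Ioo]
        congr 1
        ext x
        simp [Set.indicator, hu.1]
      rw [this, setLIntegral_congr Ioo_ae_eq_Ioc, ← ofReal_integral_eq_lintegral_ofReal]
      · rw [← intervalIntegral.integral_of_le hu.2]
        congr 1
        rw [intervalIntegral.integral_comp_sub_right (fun x => x)]
        simp
      · exact (Continuous.integrableOn_Icc (by fun_prop)).mono_set Set.Ioc_subset_Icc_self
      · filter_upwards [ae_restrict_mem measurableSet_Ioc] with x hx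
        simp only [Pi.zero_apply]
        linarith [hx.1]
    · rw [Set.indicator_of_notMem hu]
      rw [← lintegral_zero (μ := (volume : Measure ℝ))]
      congr 1
      ext x
      apply Set.indicator_of_notMem
      rintro ⟨h1, h2, h3⟩
      exact hu ⟨h1, by simp only at *; linarith⟩
  simp_rw [inner]
  rw [lintegral_indicator measurableSet_Ioc, ← ofReal_integral_eq_lintegral_ofReal]
  · rw [← intervalIntegral.integral_of_le hs.le]
    congr 1
    rw [intervalIntegral.integral_comp_sub_left (fun x => x ^ 2 / 2), intervalIntegral.integral_div]
    simp
    ring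
  · exact (Continuous.integrableOn_Icc (by fun_prop)).mono_set Set.Ioc_subset_Icc_self
  · filter_upwards with x
    simp only [Pi.zero_apply]
    positivity

lemma J_step2 (N : ℕ) (m c : ℝ) :
    ∫⁻ r : ℝ × ℝ, Phi N (r, (m, c)) =
      {z : ℝ × ℝ | 0 < z.1 ∧ 0 < z.2 ∧ z.2 < 1 ∧ z.2 < z.1}.indicator (fun z =>
        ENNReal.ofReal ((z.2 / z.1) ^ 3 / 6) * ENNReal.ofReal (1 - z.2 ^ 2 / z.1) ^ N) (m, c) := by
  by_cases h : 0 < m ∧ 0 < c ∧ c < 1 ∧ c < m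
  · rw [Set.indicator_of_mem (by exact h)]
    obtain ⟨h1, h2, h3, h4⟩ := h
    rw [← tri_moment (c / m) (by positivity)]
    rw [← lint_pair]
    · rw [← lintegral_mul_const]
      · congr 1
        ext r
        simp only [Phi, Set.indicator, Set.mem_ofPred_eq, h1, h3, h4, lt_div_iff₀ h1, mul_comm m, true_and]
        split_ifs <;> simp
      · exact Measurable.indicator (by fun_prop) (by measurability)
    · exact Measurable.indicator (by fun_prop) (by measurability)
  · rw [Set.indicator_of_notMem (by exact h)]
    rw [← lintegral_zero (μ := (volume : Measure (ℝ × ℝ)))]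
    congr 1
    ext r
    apply Set.indicator_of_notMem
    rintro ⟨h1, h2, h3, h4, h5, h6⟩
    simp only at *
    have : 0 < m * r.2 := mul_pos h3 (h1.trans h2)
    exact h ⟨h3, by linarith, h4, h5⟩

lemma J_step3 (N : ℕ) :
    ∫⁻ p : ℝ × ℝ, ∫⁻ X : ℝ × ℝ, Fq N (p, X) =
      ∫⁻ a in Set.Ioc (0 : ℝ) 1, ∫⁻ b in Set.Ioc (0 : ℝ) 1,
        ENNReal.ofReal (a * b / 6) * ENNReal.ofReal (1 - a * b) ^ N := by
  rw [J_step1, lint_pair (Measurable.lintegral_prod_left' (meas_Phi N))]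
  simp_rw [J_step2]
  have s1 : ∀ m, ∫⁻ c, {z : ℝ × ℝ | 0 < z.1 ∧ 0 < z.2 ∧ z.2 < 1 ∧ z.2 < z.1}.indicator (fun z =>
        ENNReal.ofReal ((z.2 / z.1) ^ 3 / 6) * ENNReal.ofReal (1 - z.2 ^ 2 / z.1) ^ N) (m, c)
      = ∫⁻ a, {z : ℝ × ℝ | 0 < z.1 ∧ 0 < z.2 ∧ z.2 < 1 ∧ z.1 * z.2 < 1}.indicator (fun z =>
        ENNReal.ofReal (z.1 * z.2 ^ 3 / 6) * ENNReal.ofReal (1 - z.1 * z.2 ^ 2) ^ N) (m, a) := by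
    intro m
    by_cases hm : 0 < m
    · rw [lint_mul _ hm, ← lintegral_const_mul]
      · congr 1
        ext a
        have e : (m * a < m) ↔ (a < 1) := by
          constructor
          · intro h; by_contra hh; push Not at hh; nlinarith
          · intro h; nlinarith
        simp only [Set.indicator, Set.mem_ofPred_eq, hm, true_and, mul_pos_iff_of_pos_left hm, e]
        have e1 : m * a / m = a := by field_simp
        have e2 : (m * a) ^ 2 / m = m * a ^ 2 := by field_simp
        simp only [e1, e2, and_comm (a := m * a < 1)]
        split_ifs
        · rw [← mul_assoc, ← ENNReal.ofReal_mul hm.le, mul_div_assoc]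
        · simp
      · refine Measurable.comp (g := Set.indicator _ _) (Measurable.indicator (by fun_prop) (by measurability)) (by fun_prop)
      · refine Measurable.comp (g := Set.indicator _ _) (Measurable.indicator (by fun_prop) (by measurability)) (by fun_prop)
    · simp [Set.indicator, hm]
  simp_rw [s1]
  rw [lint_swap]
  · rw [← lintegral_indicator measurableSet_Ioc]
    apply lintegral_congr_ae
    have hne : ∀ᵐ a : ℝ, a ≠ 1 := by simp [ae_iff]
    filter_upwards [hne] with a ha1
    by_cases ha : 0 < a ∧ a < 1
    · rw [Set.indicator_of_mem (by exact ⟨ha.1, ha.2.le⟩)]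
      rw [lint_mul _ (inv_pos.2 ha.1), ← lintegral_const_mul,
        ← setLIntegral_congr Ioo_ae_eq_Ioc, ← lintegral_indicator measurableSet_Ioo]
      · congr 1
        ext b
        have ha0 := ha.1
        have e : a⁻¹ * b * a = b := by field_simp
        have e1 : a⁻¹ * (a⁻¹ * b * a ^ 3 / 6) = a * b / 6 := by field_simp
        have e2 : a⁻¹ * b * a ^ 2 = a * b := by field_simp
        simp only [Set.indicator, Set.mem_ofPred_eq, ha.1, ha.2, true_and, e, e2,
          mul_pos_iff_of_pos_left (inv_pos.2 ha.1), Set.mem_Ioo]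
        split_ifs
        · rw [← mul_assoc, ← ENNReal.ofReal_mul (inv_pos.2 ha.1).le, ← e1]
        · simp
      · refine Measurable.comp (g := Set.indicator _ _) (Measurable.indicator (by fun_prop) (by measurability)) (by fun_prop)
      · refine Measurable.comp (g := Set.indicator _ _) (Measurable.indicator (by fun_prop) (by measurability)) (by fun_prop)
    · rw [Set.indicator_of_notMem (by
        rintro ⟨h1, h2⟩
        exact ha ⟨h1, lt_of_le_of_ne h2 ha1⟩)]
      rw [← lintegral_zero (μ := (volume : Measure ℝ))]
      congr 1
      ext m
      apply Set.indicator_of_notMem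
      rintro ⟨h1, h2, h3, h4⟩
      exact ha ⟨h2, h3⟩
  · exact Measurable.indicator (by fun_prop) (by measurability)


lemma int_one_sub_pow (n : ℕ) : ∫ w in (0 : ℝ)..1, (1 - w) ^ n = 1 / ((n : ℝ) + 1) := by
  rw [intervalIntegral.integral_comp_sub_left (fun x => x ^ n)]
  simp

lemma lint_one_sub_pow (n : ℕ) :
    ∫⁻ w in Set.Ioc (0 : ℝ) 1, ENNReal.ofReal (1 - w) ^ n = ENNReal.ofReal (1 / ((n : ℝ) + 1)) := by
  rw [← int_one_sub_pow, intervalIntegral.integral_of_le zero_le_one,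
    ofReal_integral_eq_lintegral_ofReal]
  · apply setLIntegral_congr_fun measurableSet_Ioc
    intro w hw
    simp only
    rw [ENNReal.ofReal_pow]
    linarith [hw.2]
  · exact (Continuous.integrableOn_Icc (by fun_prop)).mono_set Set.Ioc_subset_Icc_self
  · filter_upwards [ae_restrict_mem measurableSet_Ioc] with x hx
    have : 0 ≤ 1 - x := by linarith [hx.2]
    simp only [Pi.zero_apply]
    positivity

lemma int_inner (N : ℕ) (a : ℝ) (ha : 0 < a) :
    ∫ b in (0 : ℝ)..1, a * b * (1 - a * b) ^ N =
      (1 / ((N : ℝ) + 1)) * (-(1 - a) ^ (N + 1) +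
        (1 / ((N : ℝ) + 2)) * ∑ i ∈ Finset.range (N + 2), (1 - a) ^ i) := by
  have hd : ∀ b ∈ Set.uIcc (0 : ℝ) 1, HasDerivAt (fun b : ℝ =>
      (-b * (1 - a * b) ^ (N + 1) - (1 - a * b) ^ (N + 2) / (((N : ℝ) + 2) * a)) / ((N : ℝ) + 1))
      (a * b * (1 - a * b) ^ N) b := by
    intro b _
    have h0 : HasDerivAt (fun b : ℝ => 1 - a * b) (-a) b := by
      simpa using ((hasDerivAt_id b).const_mul a).const_sub 1
    have h1 := h0.pow (N + 1)
    have h2 := (h0.pow (N + 2)).div_const (((N : ℝ) + 2) * a)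
    have h3 := ((((hasDerivAt_id b).neg).mul h1).sub h2).div_const ((N : ℝ) + 1)
    refine HasDerivAt.congr_deriv h3 ?_
    have : (N : ℝ) + 1 ≠ 0 := by positivity
    have : (N : ℝ) + 2 ≠ 0 := by positivity
    push_cast
    simp only [Nat.add_sub_cancel, id, Pi.neg_apply, Pi.pow_apply, show N + 2 - 1 = N + 1 by omega]
    field_simp
    ring
  rw [intervalIntegral.integral_eq_sub_of_hasDerivAt hd
    (Continuous.intervalIntegrable (by fun_prop) _ _)]
  have hg := mul_neg_geom_sum (1 - a) (N + 2)
  have : ∑ i ∈ Finset.range (N + 2), (1 - a) ^ i = (1 - (1 - a) ^ (N + 2)) / a := by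
    rw [eq_div_iff ha.ne']
    linarith
  rw [this]
  have : (N : ℝ) + 1 ≠ 0 := by positivity
  have : (N : ℝ) + 2 ≠ 0 := by positivity
  simp
  field_simp
  ring

lemma J_val (N : ℕ) :
    ∫⁻ p : ℝ × ℝ, ∫⁻ X : ℝ × ℝ, Fq N (p, X) =
      ENNReal.ofReal ((H (N + 2) - 1) / (6 * ((N : ℝ) + 1) * ((N : ℝ) + 2))) := by
  rw [J_step3]
  have hin : ∀ a ∈ Set.Ioc (0 : ℝ) 1, 0 ≤ (1 / ((N : ℝ) + 1)) * (-(1 - a) ^ (N + 1) +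
        (1 / ((N : ℝ) + 2)) * ∑ i ∈ Finset.range (N + 2), (1 - a) ^ i) / 6 ∧
      ∫⁻ b in Set.Ioc (0 : ℝ) 1,
        ENNReal.ofReal (a * b / 6) * ENNReal.ofReal (1 - a * b) ^ N =
      ENNReal.ofReal ((1 / ((N : ℝ) + 1)) * (-(1 - a) ^ (N + 1) +
        (1 / ((N : ℝ) + 2)) * ∑ i ∈ Finset.range (N + 2), (1 - a) ^ i) / 6) := by
    intro a ha
    have hnn : ∀ b ∈ Set.Ioc (0 : ℝ) 1, 0 ≤ a * b ∧ 0 ≤ 1 - a * b := by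
      intro b hb
      have := ha.1; have := ha.2; have := hb.1; have := hb.2
      constructor
      · positivity
      · nlinarith
    rw [← int_inner N a ha.1, ← intervalIntegral.integral_div]
    constructor
    · apply intervalIntegral.integral_nonneg_of_ae_restrict zero_le_one
      rw [← restrict_Ioc_eq_restrict_Icc]
      filter_upwards [ae_restrict_mem measurableSet_Ioc] with b hb
      have := hnn b hb
      obtain ⟨k1, k2⟩ := this
      simp only [Pi.zero_apply]
      positivity
    · rw [intervalIntegral.integral_of_le zero_le_one, ofReal_integral_eq_lintegral_ofReal]
      · apply setLIntegral_congr_fun measurableSet_Ioc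
        intro b hb
        have := hnn b hb
        have := this.1
        simp only
        rw [← ENNReal.ofReal_pow (hnn b hb).2, ← ENNReal.ofReal_mul (by positivity)]
        congr 1
        ring
      · exact (Continuous.integrableOn_Icc (by fun_prop)).mono_set Set.Ioc_subset_Icc_self
      · filter_upwards [ae_restrict_mem measurableSet_Ioc] with b hb
        have := hnn b hb
        obtain ⟨k1, k2⟩ := this
        simp only [Pi.zero_apply]
        positivity
  rw [setLIntegral_congr_fun measurableSet_Ioc (fun a ha => (hin a ha).2),
    ← ofReal_integral_eq_lintegral_ofReal]
  · congr 1
    rw [← intervalIntegral.integral_of_le zero_le_one, intervalIntegral.integral_div,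
      intervalIntegral.integral_const_mul, intervalIntegral.integral_add
        (Continuous.intervalIntegrable (by fun_prop) _ _)
        (Continuous.intervalIntegrable (by fun_prop) _ _), intervalIntegral.integral_neg,
      intervalIntegral.integral_const_mul, intervalIntegral.integral_finsetSum
        (fun i _ => Continuous.intervalIntegrable (by fun_prop) _ _)]
    simp_rw [int_one_sub_pow]
    rw [← H]
    have : (N : ℝ) + 1 ≠ 0 := by positivity
    have : (N : ℝ) + 2 ≠ 0 := by positivity
    push_cast
    have e : (N : ℝ) + 1 + 1 = N + 2 := by ring
    rw [e]
    field_simp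
    ring
  · exact (Continuous.integrableOn_Icc (by fun_prop)).mono_set Set.Ioc_subset_Icc_self
  · filter_upwards [ae_restrict_mem measurableSet_Ioc] with a ha
    exact (hin a ha).1

lemma muT_lint {f : ℝ × ℝ → ENNReal} (hf : ∀ p, p ∉ To → f p = 0) :
    ∫⁻ p, f p ∂μT = 2 * ∫⁻ p, f p := by
  rw [muT_eq, lintegral_smul_measure, ← lintegral_indicator meas_To, smul_eq_mul]
  congr 2
  ext p
  by_cases hp : p ∈ To
  · rw [Set.indicator_of_mem hp]
  · rw [Set.indicator_of_notMem hp, hf p hp]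

lemma To_int {g : ℝ × ℝ → ENNReal} (hg : Measurable g) :
    ∫⁻ p, g (p.1, p.2 / (1 - p.1)) ∂μT =
      2 * ∫⁻ u in Set.Ioc (0 : ℝ) 1, ENNReal.ofReal (1 - u) * ∫⁻ w in Set.Ioc (0 : ℝ) 1, g (u, w) := by
  rw [muT_eq, lintegral_smul_measure, ← lintegral_indicator meas_To, smul_eq_mul]
  congr 1
  have hm : Measurable (To.indicator fun p : ℝ × ℝ => g (p.1, p.2 / (1 - p.1))) :=
    (hg.comp (by fun_prop)).indicator meas_To
  rw [lint_pair hm, ← lintegral_indicator measurableSet_Ioc]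
  have hne : ∀ᵐ a : ℝ, a ≠ 1 := by simp [ae_iff]
  apply lintegral_congr_ae
  filter_upwards [hne] with u hu
  by_cases h : 0 < u ∧ u < 1
  · have h1 : 0 < 1 - u := by linarith
    rw [Set.indicator_of_mem (by exact ⟨h.1, h.2.le⟩), 
      lint_mul (f := fun v => To.indicator (fun p : ℝ × ℝ => g (p.1, p.2 / (1 - p.1))) (u, v))
        (hm.comp (by fun_prop)) h1]
    congr 1
    rw [← setLIntegral_congr Ioo_ae_eq_Ioc, ← lintegral_indicator measurableSet_Ioo]
    congr 1
    ext w
    have e1 : (1 - u) * w / (1 - u) = w := by field_simp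
    have e2 : u + (1 - u) * w < 1 ↔ w < 1 := by
      constructor
      · intro h; by_contra hh; push Not at hh; nlinarith
      · intro h; nlinarith
    simp only [Set.indicator, To, Set.mem_ofPred_eq, h.1, true_and, e2, e1, Set.mem_Ioo,
      mul_pos_iff_of_pos_left h1]
  · rw [Set.indicator_of_notMem (by
        rintro ⟨h1, h2⟩
        exact h ⟨h1, lt_of_le_of_ne h2 hu⟩)]
    rw [← lintegral_zero (μ := (volume : Measure ℝ))]
    congr 1
    ext v
    apply Set.indicator_of_notMem
    rintro ⟨h1, h2, h3⟩
    simp only at *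
    exact h ⟨h1, by linarith⟩

lemma pi_slice (N : ℕ) (i : Fin (N + 1)) {R : Set (ℝ × ℝ)} {S : Set ((ℝ × ℝ) × (ℝ × ℝ))}
    (hR : MeasurableSet R) (hS : MeasurableSet S) :
    P (N + 1) {ω | ω i ∈ R ∧ ∀ j, j ≠ i → (ω i, ω j) ∈ S} =
      ∫⁻ X, R.indicator (fun X => μT {z | (X, z) ∈ S} ^ N) X ∂μT := by
  have mp := measurePreserving_piFinSuccAbove (fun _ : Fin (N + 1) => μT) i
  have hA : MeasurableSet {q : (ℝ × ℝ) × (Fin N → ℝ × ℝ) | q.1 ∈ R ∧ ∀ j, (q.1, q.2 j) ∈ S} := by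
    have e0 : {q : (ℝ × ℝ) × (Fin N → ℝ × ℝ) | q.1 ∈ R ∧ ∀ j, (q.1, q.2 j) ∈ S} =
        (Prod.fst ⁻¹' R) ∩ ⋂ j, {q : (ℝ × ℝ) × (Fin N → ℝ × ℝ) | (q.1, q.2 j) ∈ S} := by
      ext q; simp
    rw [e0]
    refine MeasurableSet.inter (measurable_fst hR) (MeasurableSet.iInter fun j => ?_)
    exact hS.preimage (f := fun q : (ℝ × ℝ) × (Fin N → ℝ × ℝ) => (q.1, q.2 j)) (by fun_prop)
  have e : {ω : Fin (N + 1) → ℝ × ℝ | ω i ∈ R ∧ ∀ j, j ≠ i → (ω i, ω j) ∈ S} =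
      (MeasurableEquiv.piFinSuccAbove (fun _ => ℝ × ℝ) i) ⁻¹'
        {q : (ℝ × ℝ) × (Fin N → ℝ × ℝ) | q.1 ∈ R ∧ ∀ j, (q.1, q.2 j) ∈ S} := by
    ext ω
    simp only [Set.mem_ofPred_eq, Set.mem_preimage, MeasurableEquiv.piFinSuccAbove_apply]
    constructor
    · rintro ⟨h1, h2⟩
      exact ⟨h1, fun j => h2 _ (Fin.succAbove_ne i j)⟩
    · rintro ⟨h1, h2⟩
      refine ⟨h1, fun j hj => ?_⟩
      obtain ⟨k, rfl⟩ := Fin.exists_succAbove_eq hj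
      exact h2 k
  unfold P
  rw [e, mp.measure_preimage hA.nullMeasurableSet, Measure.prod_apply hA]
  congr 1
  ext X
  by_cases hX : X ∈ R
  · rw [Set.indicator_of_mem hX]
    have : (Prod.mk X ⁻¹' {q : (ℝ × ℝ) × (Fin N → ℝ × ℝ) | q.1 ∈ R ∧ ∀ j, (q.1, q.2 j) ∈ S})
        = Set.univ.pi fun _ => {z | (X, z) ∈ S} := by
      ext ω
      simp [hX]
    rw [this, Measure.pi_pi]
    simp
  · rw [Set.indicator_of_notMem hX]
    have : (Prod.mk X ⁻¹' {q : (ℝ × ℝ) × (Fin N → ℝ × ℝ) | q.1 ∈ R ∧ ∀ j, (q.1, q.2 j) ∈ S})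
        = ∅ := by
      ext ω
      simp [hX]
    rw [this]; simp


lemma Dt_line {p X : ℝ × ℝ} (h : p.1 < X.1) (z : ℝ × ℝ) :
    Dt p X z = (X.1 - p.1) * (z.2 + mm p X * z.1 - cc p X) := by
  have : X.1 - p.1 ≠ 0 := by linarith
  simp only [Dt, cc, mm]
  field_simp
  ring

lemma slice_val {R : Set ℝ} (hR : R = Set.Ioi 0 ∨ R = Set.Ici 0) {p X : ℝ × ℝ} (h : p.1 < X.1)
    (hc : 0 < cc p X) (hc1 : cc p X ≤ 1) (hcm : cc p X ≤ mm p X) :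
    μT {z | Dt p X z ∈ R} = ENNReal.ofReal (1 - cc p X ^ 2 / mm p X) := by
  have hx : 0 < X.1 - p.1 := by linarith
  simp_rw [Dt_line h]
  rcases hR with rfl | rfl
  · rw [← (muT_above _ _ hc hc1 hcm).2]
    congr 1
    ext z
    simp only [Set.mem_Ioi, Set.mem_ofPred_eq, mul_pos_iff_of_pos_left hx, sub_pos]
  · rw [← (muT_above _ _ hc hc1 hcm).1]
    congr 1
    ext z
    simp only [Set.mem_Ici, Set.mem_ofPred_eq, mul_nonneg_iff_of_pos_left hx, sub_nonneg]

lemma Adm_bounds {p X : ℝ × ℝ} (h : Adm p X) :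
    0 < cc p X ∧ cc p X ≤ 1 ∧ cc p X ≤ mm p X := by
  obtain ⟨⟨h1, h2, h3⟩, _, h4, h5, h6⟩ := h
  have hx : 0 < X.1 - p.1 := by linarith
  rw [Dt_line h4, mul_pos_iff_of_pos_left hx] at h5 h6
  simp only at h5 h6
  have k : 0 < mm p X := by
    by_contra hh
    push Not at hh
    have e : cc p X = p.2 + mm p X * p.1 := rfl
    have : 0 < 1 - p.1 := by linarith
    nlinarith
  refine ⟨?_, by linarith, by linarith⟩
  unfold cc
  positivity

/-- event that the edge through `(1,0)` is visible -/
def B0 (n : ℕ) (R : Set ℝ) : Set ((Fin n → ℝ × ℝ) × (ℝ × ℝ)) :=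
  {q | q.2 ∈ To ∧ ∀ j, Dt q.2 (1, 0) (q.1 j) ∈ R}

/-- event that the tangent through the `i`-th point is visible -/
def Bi (n : ℕ) (R : Set ℝ) (i : Fin n) : Set ((Fin n → ℝ × ℝ) × (ℝ × ℝ)) :=
  {q | Adm q.2 (q.1 i) ∧ ∀ j, j ≠ i → Dt q.2 (q.1 i) (q.1 j) ∈ R}

lemma meas_Dt : Measurable fun t : (ℝ × ℝ) × (ℝ × ℝ) × (ℝ × ℝ) => Dt t.1 t.2.1 t.2.2 := by
  unfold Dt; fun_prop

lemma meas_B0 (n : ℕ) {R : Set ℝ} (hR : MeasurableSet R) : MeasurableSet (B0 n R) := by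
  have e0 : B0 n R = (Prod.snd ⁻¹' To) ∩
      ⋂ j, {q : (Fin n → ℝ × ℝ) × (ℝ × ℝ) | Dt q.2 (1, 0) (q.1 j) ∈ R} := by
    ext q; simp [B0]
  rw [e0]
  refine MeasurableSet.inter (measurable_snd meas_To) (MeasurableSet.iInter fun j => ?_)
  exact hR.preimage (f := fun q : (Fin n → ℝ × ℝ) × (ℝ × ℝ) => Dt q.2 (1, 0) (q.1 j))
    (meas_Dt.comp (g := fun t : (ℝ × ℝ) × (ℝ × ℝ) × (ℝ × ℝ) => Dt t.1 t.2.1 t.2.2)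
      (f := fun q : (Fin n → ℝ × ℝ) × (ℝ × ℝ) => (q.2, ((1 : ℝ), (0 : ℝ)), q.1 j)) (by fun_prop))

lemma meas_Bi (n : ℕ) {R : Set ℝ} (hR : MeasurableSet R) (i : Fin n) :
    MeasurableSet (Bi n R i) := by
  have e0 : Bi n R i = ((fun q : (Fin n → ℝ × ℝ) × (ℝ × ℝ) => (q.2, q.1 i)) ⁻¹' {q | Adm q.1 q.2}) ∩
      ⋂ j, ⋂ (_ : j ≠ i), {q : (Fin n → ℝ × ℝ) × (ℝ × ℝ) | Dt q.2 (q.1 i) (q.1 j) ∈ R} := by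
    ext q; simp [Bi]
  rw [e0]
  refine MeasurableSet.inter (meas_Adm.preimage (by fun_prop))
    (MeasurableSet.iInter fun j => MeasurableSet.iInter fun _ => ?_)
  exact hR.preimage (f := fun q : (Fin n → ℝ × ℝ) × (ℝ × ℝ) => Dt q.2 (q.1 i) (q.1 j))
    (meas_Dt.comp (g := fun t : (ℝ × ℝ) × (ℝ × ℝ) × (ℝ × ℝ) => Dt t.1 t.2.1 t.2.2)
      (f := fun q : (Fin n → ℝ × ℝ) × (ℝ × ℝ) => (q.2, q.1 i, q.1 j)) (by fun_prop))

lemma meas_R {R : Set ℝ} (hR : R = Set.Ioi 0 ∨ R = Set.Ici 0) : MeasurableSet R := by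
  rcases hR with rfl | rfl
  · exact measurableSet_Ioi
  · exact measurableSet_Ici

lemma B0_val (n : ℕ) {R : Set ℝ} (hR : R = Set.Ioi 0 ∨ R = Set.Ici 0) :
    ((P n).prod μT) (B0 n R) = ENNReal.ofReal (1 / ((n : ℝ) + 1)) := by
  rw [Measure.prod_apply_symm (meas_B0 n (meas_R hR))]
  have s1 : ∀ᵐ p ∂μT, (P n) ((fun x => (x, p)) ⁻¹' B0 n R)
      = ENNReal.ofReal (1 - p.2 / (1 - p.1)) ^ n := by
    filter_upwards [ae_To] with p hp
    have e : ((fun x => (x, p)) ⁻¹' B0 n R) = Set.univ.pi fun _ => {z | Dt p (1, 0) z ∈ R} := by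
      ext ω
      simp [B0, hp]
    obtain ⟨h1, h2, h3⟩ := hp
    have hx : 0 < 1 - p.1 := by linarith
    have em : mm p (1, 0) = p.2 / (1 - p.1) := by simp [mm]
    have ec : cc p (1, 0) = p.2 / (1 - p.1) := by
      rw [cc, em]; field_simp; ring
    have hpos : 0 < p.2 / (1 - p.1) := by positivity
    have hle : p.2 / (1 - p.1) ≤ 1 := by
      rw [div_le_one hx]; linarith
    have hs := slice_val hR (p := p) (X := (1, 0)) (by simp only; linarith) (by rwa [ec])
      (by rwa [ec]) (by rw [ec, em])
    rw [e, P, Measure.pi_pi, hs, ec, em]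
    simp only [Finset.prod_const, Finset.card_univ, Fintype.card_fin]
    congr 3
    field_simp
  rw [lintegral_congr_ae s1, To_int (g := fun z => ENNReal.ofReal (1 - z.2) ^ n) (by fun_prop)]
  simp_rw [lint_one_sub_pow]
  have := lint_one_sub_pow 1
  simp only [pow_one] at this
  rw [lintegral_mul_const _ (by fun_prop), this, ← mul_assoc, two_half]
  norm_num

lemma Bi_val (N : ℕ) {R : Set ℝ} (hR : R = Set.Ioi 0 ∨ R = Set.Ici 0) (i : Fin (N + 1)) :
    ((P (N + 1)).prod μT) (Bi (N + 1) R i) =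
      ENNReal.ofReal (2 / 3 * (H (N + 2) - 1) / (((N : ℝ) + 1) * ((N : ℝ) + 2))) := by
  rw [Measure.prod_apply_symm (meas_Bi (N + 1) (meas_R hR) i)]
  have s1 : ∀ p, (P (N + 1)) ((fun x => (x, p)) ⁻¹' Bi (N + 1) R i)
      = ∫⁻ X, Fq N (p, X) ∂μT := by
    intro p
    have hR' : MeasurableSet {X | Adm p X} :=
      meas_Adm.preimage (f := fun X => (p, X)) (by fun_prop)
    have hS' : MeasurableSet {w : (ℝ × ℝ) × (ℝ × ℝ) | Dt p w.1 w.2 ∈ R} :=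
      (meas_R hR).preimage (f := fun w : (ℝ × ℝ) × (ℝ × ℝ) => Dt p w.1 w.2)
      (meas_Dt.comp (g := fun t : (ℝ × ℝ) × (ℝ × ℝ) × (ℝ × ℝ) => Dt t.1 t.2.1 t.2.2)
        (f := fun w : (ℝ × ℝ) × (ℝ × ℝ) => (p, w.1, w.2)) (by fun_prop))
    refine (pi_slice N i hR' hS').trans ?_
    congr 1
    ext X
    by_cases h : Adm p X
    · rw [Set.indicator_of_mem (by exact h)]
      obtain ⟨k1, k2, k3⟩ := Adm_bounds h
      have := slice_val hR h.2.2.1 k1 k2 k3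
      simp only [Fq, h, if_true]
      rw [← this]
      rfl
    · rw [Set.indicator_of_notMem (by exact h)]
      simp [Fq, h]
  simp_rw [s1]
  have z1 : ∀ p X, p ∉ To → Fq N (p, X) = 0 := by
    intro p X h; simp [Fq, Adm, h]
  have z2 : ∀ p X, X ∉ To → Fq N (p, X) = 0 := by
    intro p X h; simp [Fq, Adm, h]
  have s2 : ∀ p, ∫⁻ X, Fq N (p, X) ∂μT = 2 * ∫⁻ X, Fq N (p, X) := fun p => muT_lint (z2 p)
  simp_rw [s2]
  rw [muT_lint (by intro p hp; simp [z1 p _ hp]),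
    lintegral_const_mul _ (Measurable.lintegral_prod_right' (meas_Fq N)), J_val, two_half, two_half]
  congr 1
  have : (N : ℝ) + 1 ≠ 0 := by positivity
  have : (N : ℝ) + 2 ≠ 0 := by positivity
  field_simp
  ring

lemma sum_val (n : ℕ) {R : Set ℝ} (hR : R = Set.Ioi 0 ∨ R = Set.Ici 0) :
    ((P n).prod μT) (B0 n R) + ∑ i, ((P n).prod μT) (Bi n R i) =
      ENNReal.ofReal ((1 / 3 + 2 / 3 * H (n + 1)) / ((n : ℝ) + 1)) := by
  rw [B0_val n hR]
  cases n with
  | zero => simp [H]; norm_num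
  | succ N =>
    simp_rw [Bi_val N hR]
    have hH : 1 ≤ H (N + 2) := by
      unfold H
      rw [Finset.sum_range_succ']
      have : 0 ≤ ∑ k ∈ Finset.range (N + 1), 1 / (((k + 1 : ℕ) : ℝ) + 1) :=
        Finset.sum_nonneg fun _ _ => by positivity
      simpa using this
    have hnn : 0 ≤ 2 / 3 * (H (N + 2) - 1) / (((N : ℝ) + 1) * ((N : ℝ) + 2)) := by
      have : 0 ≤ H (N + 2) - 1 := by linarith
      positivity
    rw [Finset.sum_const, Finset.card_univ, Fintype.card_fin, nsmul_eq_mul,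
      ← ENNReal.ofReal_natCast, ← ENNReal.ofReal_mul (by positivity),
      ← ENNReal.ofReal_add (by positivity) (by positivity)]
    congr 1
    have : (N : ℝ) + 1 ≠ 0 := by positivity
    have : (N : ℝ) + 2 ≠ 0 := by positivity
    have : (N : ℝ) + 1 + 1 ≠ 0 := by positivity
    push_cast
    field_simp
    ring


/-- sum of the section measures -/
def Ssum (n : ℕ) (R : Set ℝ) (ω : Fin n → ℝ × ℝ) : ENNReal :=
  μT (Prod.mk ω ⁻¹' B0 n R) + ∑ i, μT (Prod.mk ω ⁻¹' Bi n R i)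

lemma meas_Ssum (n : ℕ) {R : Set ℝ} (hR : MeasurableSet R) : Measurable (Ssum n R) := by
  unfold Ssum
  refine (measurable_measure_prodMk_left (meas_B0 n hR)).add ?_
  exact Finset.measurable_fun_sum _ fun i _ => measurable_measure_prodMk_left (meas_Bi n hR i)

lemma lint_Ssum (n : ℕ) {R : Set ℝ} (hR : R = Set.Ioi 0 ∨ R = Set.Ici 0) :
    ∫⁻ ω, Ssum n R ω ∂P n = ENNReal.ofReal ((1 / 3 + 2 / 3 * H (n + 1)) / ((n : ℝ) + 1)) := by
  have hm := meas_R hR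
  rw [← sum_val n hR]
  unfold Ssum
  rw [lintegral_add_left (measurable_measure_prodMk_left (meas_B0 n hm)),
    lintegral_finsetSum _ fun i _ => measurable_measure_prodMk_left (meas_Bi n hm i),
    Measure.prod_apply (meas_B0 n hm)]
  congr 1
  apply Finset.sum_congr rfl
  intro i _
  rw [Measure.prod_apply (meas_Bi n hm i)]

lemma ae_all_To (n : ℕ) : ∀ᵐ ω ∂P n, ∀ i, ω i ∈ To := by
  rw [ae_all_iff]
  intro i
  exact (Measure.tendsto_eval_ae_ae (μ := fun _ : Fin n => μT) (i := i)).eventually ae_To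

lemma meas_Tchain (n : ℕ) (ω : Fin n → ℝ × ℝ) : MeasurableSet (Tchain n ω) := by
  apply IsClosed.measurableSet
  apply IsCompact.isClosed
  apply Set.Finite.isCompact_convexHull
  exact (Set.finite_range ω).union (by simp)

lemma Tchain_subset {n : ℕ} {ω : Fin n → ℝ × ℝ} (h : ∀ i, ω i ∈ To) : Tchain n ω ⊆ T := by
  apply convexHull_min
  · rintro z (⟨i, rfl⟩ | hz)
    · exact To_subset (h i)
    · apply subset_convexHull
      right
      exact hz
  · exact convex_convexHull ℝ _

lemma V_eq {n : ℕ} {ω : Fin n → ℝ × ℝ} (h : ∀ i, ω i ∈ To) :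
    V n ω = 1 - (μT (Tchain n ω)ᶜ).toReal := by
  rw [prob_compl_eq_one_sub (meas_Tchain n ω), ENNReal.toReal_sub_of_le prob_le_one (by simp)]
  have : μT (Tchain n ω) = 2 * volume (Tchain n ω) := by
    rw [μT, Measure.smul_apply, Measure.restrict_apply (meas_Tchain n ω),
      Set.inter_eq_left.2 (Tchain_subset h), smul_eq_mul]
  rw [this]
  simp [V]

lemma low_le {n : ℕ} {ω : Fin n → ℝ × ℝ} :
    Ssum n (Set.Ioi 0) ω ≤ μT (Tchain n ω)ᶜ := by
  have hm : ∀ i, MeasurableSet (Prod.mk ω ⁻¹' Bi n (Set.Ioi 0) i) := fun i =>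
    (meas_Bi n measurableSet_Ioi i).preimage (by fun_prop)
  have hd : Pairwise (Function.onFun Disjoint fun i => Prod.mk ω ⁻¹' Bi n (Set.Ioi 0) i) := by
    intro i j hij
    rw [Function.onFun, Set.disjoint_left]
    rintro p ⟨_, h1⟩ ⟨_, h2⟩
    have k1 : 0 < Dt p (ω i) (ω j) := h1 j hij.symm
    have k2 : 0 < Dt p (ω j) (ω i) := h2 i hij
    rw [Dt_anti] at k2
    linarith
  have hd0 : Disjoint (Prod.mk ω ⁻¹' B0 n (Set.Ioi 0))
      (⋃ i, Prod.mk ω ⁻¹' Bi n (Set.Ioi 0) i) := by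
    rw [Set.disjoint_left]
    rintro p ⟨_, h1⟩ h2
    rw [Set.mem_iUnion] at h2
    obtain ⟨i, h2, _⟩ := h2
    have k1 : 0 < Dt p (1, 0) (ω i) := h1 i
    have k2 : 0 < Dt p (ω i) (1, 0) := h2.2.2.2.1
    rw [Dt_anti] at k2
    linarith
  rw [Ssum, ← tsum_fintype (L := .unconditional _), ← measure_iUnion hd hm, ← measure_union hd0 (MeasurableSet.iUnion hm)]
  apply measure_mono
  rintro p (⟨h1, h2⟩ | h)
  · exact geom_low0 h1 h2
  · rw [Set.mem_iUnion] at h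
    obtain ⟨i, h1, h2⟩ := h
    exact geom_lowi i h1 h2

lemma le_up {n : ℕ} {ω : Fin n → ℝ × ℝ} (h : ∀ i, ω i ∈ To) :
    μT (Tchain n ω)ᶜ ≤ Ssum n (Set.Ici 0) ω := by
  calc μT (Tchain n ω)ᶜ ≤ μT ((Prod.mk ω ⁻¹' B0 n (Set.Ici 0)) ∪
        ⋃ i, Prod.mk ω ⁻¹' Bi n (Set.Ici 0) i) := by
        apply measure_mono_ae
        filter_upwards [ae_To] with p hp hpT
        rcases geom_up h hp hpT with h1 | ⟨i, h1, h2⟩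
        · exact Or.inl ⟨hp, h1⟩
        · exact Or.inr (Set.mem_iUnion.2 ⟨i, h1, h2⟩)
    _ ≤ _ := by
        refine (measure_union_le _ _).trans ?_
        unfold Ssum
        gcongr
        exact measure_iUnion_fintype_le _ _

lemma first_moment (n : ℕ) :
    ∫ ω, V n ω ∂P n = 1 - (1 / 3 + 2 / 3 * H (n + 1)) / ((n : ℝ) + 1) := by
  have hmU := meas_Ssum n (measurableSet_Ici (a := (0 : ℝ)))
  have hLU : Ssum n (Set.Ioi 0) =ᵐ[P n] Ssum n (Set.Ici 0) := by
    apply ae_eq_of_ae_le_of_lintegral_le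
    · filter_upwards [ae_all_To n] with ω hω
      exact low_le.trans (le_up hω)
    · rw [lint_Ssum n (Or.inl rfl)]; exact ENNReal.ofReal_ne_top
    · exact hmU.aemeasurable
    · rw [lint_Ssum n (Or.inl rfl), lint_Ssum n (Or.inr rfl)]
  have hV : V n =ᵐ[P n] fun ω => 1 - (Ssum n (Set.Ici 0) ω).toReal := by
    filter_upwards [hLU, ae_all_To n] with ω h1 h2
    rw [V_eq h2, le_antisymm (le_up h2) (h1 ▸ low_le)]
  have hfin : ∫⁻ ω, Ssum n (Set.Ici 0) ω ∂P n ≠ ⊤ := by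
    rw [lint_Ssum n (Or.inr rfl)]; exact ENNReal.ofReal_ne_top
  rw [integral_congr_ae hV, integral_sub (integrable_const _)
    (integrable_toReal_of_lintegral_ne_top hmU.aemeasurable hfin),
    integral_toReal hmU.aemeasurable (ae_lt_top hmU hfin), lint_Ssum n (Or.inr rfl),
    ENNReal.toReal_ofReal]
  · simp
  · have : 0 ≤ H (n + 1) := Finset.sum_nonneg fun _ _ => by positivity
    positivity

lemma V_one {ω : Fin 1 → ℝ × ℝ} (h : ω 0 ∈ To) : V 1 ω = 1 - (ω 0).1 - (ω 0).2 := by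
  rcases hX : ω 0 with ⟨x, y⟩
  rw [hX] at h
  obtain ⟨h1, h2, h3⟩ := h
  simp only at h1 h2 h3 ⊢
  let f : (ℝ × ℝ) →ₗ[ℝ] (ℝ × ℝ) := Matrix.toLin (Module.Basis.finTwoProd ℝ)
    (Module.Basis.finTwoProd ℝ) !![1 - x, -x; -y, 1 - y]
  have hf : ∀ z, f z = ((1 - x) * z.1 - x * z.2, - y * z.1 + (1 - y) * z.2) := by
    intro z
    simp only [f]
    rw [Matrix.toLin_finTwoProd_apply]
    ext <;> simp <;> ring
  have hdet : LinearMap.det f = 1 - x - y := by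
    simp only [f]
    rw [LinearMap.det_toLin, Matrix.det_fin_two_of]
    ring
  have e : Tchain 1 ω = (fun z => (x, y) + z) '' (f '' T) := by
    rw [T, LinearMap.image_convexHull]
    have : (fun z : ℝ × ℝ => (x, y) + z) = (AffineEquiv.constVAdd ℝ (ℝ × ℝ) (x, y) : (ℝ × ℝ) →ᵃ[ℝ] (ℝ × ℝ)) := by
      ext z <;> simp
    rw [this, AffineMap.image_convexHull, Tchain]
    congr 1
    have hr : Set.range ω = {(x, y)} := by
      rw [← hX]
      ext z
      simp [eq_comm]
    rw [hr, ← this]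
    simp only [Set.image_insert_eq, Set.image_singleton, hf]
    ext z
    simp
    tauto
  have : 0 < 1 - x - y := by linarith
  rw [V, e, Set.image_add_left, measure_preimage_add, Measure.addHaar_image_linearMap, hdet,
    vol_To.2, abs_of_pos this, ENNReal.toReal_mul, ENNReal.toReal_ofReal this.le,
    ENNReal.toReal_ofReal (by norm_num)]
  ring

lemma k_moment (k : ℕ) : ∫ ω, V 1 ω ^ k ∂P 1 = 2 / (((k : ℝ) + 1) * ((k : ℝ) + 2)) := by
  have hV : (fun ω => V 1 ω ^ k) =ᵐ[P 1] fun ω => (1 - (ω 0).1 - (ω 0).2) ^ k := by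
    filter_upwards [ae_all_To 1] with ω h
    rw [V_one (h 0)]
  rw [integral_congr_ae hV]
  have mp := measurePreserving_funUnique μT (Fin 1)
  have e := mp.integral_comp (MeasurableEquiv.measurableEmbedding _)
    (fun p : ℝ × ℝ => (1 - p.1 - p.2) ^ k)
  have e' : ∫ ω : Fin 1 → ℝ × ℝ, (1 - (ω 0).1 - (ω 0).2) ^ k ∂P 1
      = ∫ p : ℝ × ℝ, (1 - p.1 - p.2) ^ k ∂μT := by
    rw [← e]; rfl
  rw [e', integral_eq_lintegral_of_nonneg_ae]
  · have s1 : ∫⁻ p : ℝ × ℝ, ENNReal.ofReal ((1 - p.1 - p.2) ^ k) ∂μT =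
        ∫⁻ p : ℝ × ℝ, (fun z : ℝ × ℝ => ENNReal.ofReal (1 - z.1) ^ k * ENNReal.ofReal (1 - z.2) ^ k)
          (p.1, p.2 / (1 - p.1)) ∂μT := by
      apply lintegral_congr_ae
      filter_upwards [ae_To] with p hp
      obtain ⟨h1, h2, h3⟩ := hp
      have hx : 0 < 1 - p.1 := by linarith
      rw [← mul_pow, ← ENNReal.ofReal_mul hx.le, ← ENNReal.ofReal_pow]
      · congr 2
        field_simp
      · rw [mul_sub, mul_div_cancel₀ _ hx.ne']
        linarith
    rw [s1, To_int (g := fun z : ℝ × ℝ => ENNReal.ofReal (1 - z.1) ^ k * ENNReal.ofReal (1 - z.2) ^ k)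
      (by fun_prop)]
    have s2 : ∀ u : ℝ, ∫⁻ w in Set.Ioc (0 : ℝ) 1, ENNReal.ofReal (1 - u) ^ k * ENNReal.ofReal (1 - w) ^ k
        = ENNReal.ofReal (1 - u) ^ k * ENNReal.ofReal (1 / ((k : ℝ) + 1)) := by
      intro u
      rw [lintegral_const_mul _ (by fun_prop), lint_one_sub_pow]
    simp_rw [s2, ← mul_assoc, ← pow_succ']
    rw [lintegral_mul_const _ (by fun_prop), lint_one_sub_pow, ← ENNReal.ofReal_mul (by positivity),
      two_half, ENNReal.toReal_ofReal (by positivity)]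
    have : (k : ℝ) + 1 ≠ 0 := by positivity
    have : (k : ℝ) + 2 ≠ 0 := by positivity
    have : (k : ℝ) + 1 + 1 ≠ 0 := by positivity
    push_cast
    field_simp
    ring
  · filter_upwards [ae_To] with p hp
    obtain ⟨h1, h2, h3⟩ := hp
    have : 0 ≤ 1 - p.1 - p.2 := by linarith
    simp only [Pi.zero_apply]
    positivity
  · exact Measurable.aestronglyMeasurable (by fun_prop)

/-- `q_{n,1} = n + 2/3 - (2/3) H_{n+1}` and `q_{1,k} = 2/(k+2)`. -/
theorem stmt3 (n k : ℕ) :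
    (q n 1 = (n : ℝ) + 2 / 3 - 2 / 3 * H (n + 1)) ∧
    (q 1 k = 2 / ((k : ℝ) + 2)) := by
  constructor
  · unfold q
    simp only [pow_one, first_moment, Nat.choose_one_right]
    have : (n : ℝ) + 1 ≠ 0 := by positivity
    push_cast
    field_simp
    ring
  · unfold q
    rw [k_moment]
    have e : (1 + k).choose k = k + 1 := by
      rw [add_comm, Nat.choose_succ_self_right]
    rw [e]
    have : (k : ℝ) + 1 ≠ 0 := by positivity
    have : (k : ℝ) + 2 ≠ 0 := by positivity
    push_cast
    field_simp

end
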